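/- Assume: if t₀ = min 𝕋 then f satisfies (H∞), (H^rd_loc-Lip) and (H^forw_stab); if t₀ = max 𝕋 then f satisfies (H∞), (H^ld_loc-Lip) and (H^back_regr); if t₀ ≠ inf 𝕋 and t₀ ≠ sup 𝕋 then f satisfies (H∞), (H^rd_loc-Lip), (H^forw_stab), (H^ld_loc-Lip) and (H^back_regr). Let (q₁,I¹_𝕋) and (q₂,I²_𝕋) be two solutions of (Δ-CP). Then q₁ = q₂ on I¹_𝕋 ∩ I²_𝕋 (local uniqueness). -/

import Mathlib

/-!
For a point `b` of both domains with `b > t₀`, let `τ` be the supremum of the points of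
`[t₀,b]_𝕋` at which the two solutions agree; they agree at `τ` by continuity, and if `τ < b` they
agree at a further point, so `τ = b`. For a point on the left of `t₀` the infimum is used.

* Going right, if `τ` is right-scattered, the equation holds at the atom `τ` of the Δ-measure and
  determines the value at `σ(τ)`. Going left, if `τ = σ(r)` with `r < τ`, injectivity of `G⁺(r)`
  determines the value at `r`.
* If `τ` is dense on the side considered, `f` is Lipschitz in its first variable near `τ` on that
  side, and on a short interval `[c,d]_𝕋` the supremum `S` of `‖q₁ - q₂‖` satisfies
  `S ≤ L (d - c) S ≤ S / 2` (`eq_of_small`).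

The last estimate rests on the mean value inequality `DeltaAC.norm_sub_le`: an absolutely
continuous function on a time scale with Δ-derivative bounded by `C` Δ-a.e. is `C`-Lipschitz. It
is proved without integration. The right-dense points lacking a good derivative, the countably
many right-scattered points and the endpoint `d` form a Lebesgue-null set, which is covered by an
open set `U` of small measure. A supremum argument joins `c` to `d` by a finite chain of points of
the time scale, each step of which either has slope at most `C + ε` or lies inside `U`
(`reached_right`); absolute continuity makes the total increment over the steps inside `U` less
than `ε`.
-/

open MeasureTheory Set Filter Classical

noncomputable section
open scoped Classical

/-- The forward jump operator `σ` of a time scale `T`. -/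
def tsSigma (T : Set ℝ) (t : ℝ) : ℝ :=
  if ({s | s ∈ T ∧ t < s}).Nonempty then sInf {s | s ∈ T ∧ t < s} else t

/-- The backward jump operator `ρ` of a time scale `T`. -/
def tsRho (T : Set ℝ) (t : ℝ) : ℝ :=
  if ({s | s ∈ T ∧ s < t}).Nonempty then sSup {s | s ∈ T ∧ s < t} else t

/-- The graininess function `μ(t) = σ(t) - t`. -/
def tsGrain (T : Set ℝ) (t : ℝ) : ℝ := tsSigma T t - t

/-- `t` is a right-scattered point of `T`. -/
def RightScattered (T : Set ℝ) (t : ℝ) : Prop := t < tsSigma T t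

/-- `t` is a right-dense point of `T`. -/
def RightDense (T : Set ℝ) (t : ℝ) : Prop := tsSigma T t = t

/-- `t` is a left-scattered point of `T`. -/
def LeftScattered (T : Set ℝ) (t : ℝ) : Prop := tsRho T t < t

/-- `t` is a left-dense point of `T`. -/
def LeftDense (T : Set ℝ) (t : ℝ) : Prop := tsRho T t = t

/-- `𝕋 \ {sup 𝕋}`: the time scale minus its maximum (if the maximum exists). -/
def tsUpDomain (T : Set ℝ) : Set ℝ := {t | t ∈ T ∧ ¬ IsGreatest T t}

/-- The Lebesgue Δ-measure on the time scale `T`: Lebesgue measure restricted to `T`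
plus `Σ_{r ∈ ℛ} μ(r)·δ_r` over right-scattered points `r`. -/
def deltaMeasure (T : Set ℝ) : Measure ℝ :=
  volume.restrict T +
    Measure.sum (fun r : {t : ℝ // t ∈ T ∧ RightScattered T t} =>
      ENNReal.ofReal (tsGrain T r.1) • Measure.dirac r.1)

/-- Δ-differentiability of `q` at `t`, with Δ-derivative `q'`. -/
def HasDeltaDerivAt {n : ℕ} (T : Set ℝ) (q : ℝ → EuclideanSpace ℝ (Fin n))
    (q' : EuclideanSpace ℝ (Fin n)) (t : ℝ) : Prop :=
  ∀ ε > (0:ℝ), ∃ U ∈ nhds t, ∀ s ∈ U ∩ T,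
    ‖q (tsSigma T t) - q s - (tsSigma T t - s) • q'‖ ≤ ε * |tsSigma T t - s|

/-- Absolute continuity of `q` on `[a,b]_𝕋`. -/
def DeltaAC {n : ℕ} (T : Set ℝ) (a b : ℝ) (q : ℝ → EuclideanSpace ℝ (Fin n)) : Prop :=
  ∀ ε > (0:ℝ), ∃ δ > (0:ℝ), ∀ (m : ℕ) (u v : ℕ → ℝ),
    (∀ k < m, u k ∈ Icc a b ∩ T) → (∀ k < m, v k ∈ Icc a b ∩ T) →
    (∀ k < m, u k ≤ v k) →
    (∀ i < m, ∀ j < m, i ≠ j → Disjoint (Icc (u i) (v i)) (Icc (u j) (v j))) →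
    (∑ k ∈ Finset.range m, (v k - u k)) < δ →
    (∑ k ∈ Finset.range m, ‖q (v k) - q (u k)‖) < ε

/-- `f` is a Δ-Carathéodory function on `Ω × 𝕋\{sup 𝕋}`. -/
def DeltaCaratheodory {n : ℕ} (T : Set ℝ) (Ω : Set (EuclideanSpace ℝ (Fin n)))
    (f : EuclideanSpace ℝ (Fin n) → ℝ → EuclideanSpace ℝ (Fin n)) : Prop :=
  (∀ x ∈ Ω, AEMeasurable (fun t => f x t) ((deltaMeasure T).restrict (tsUpDomain T))) ∧
    ∀ᵐ t ∂((deltaMeasure T).restrict (tsUpDomain T)), ContinuousOn (fun x => f x t) Ω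

/-- Hypothesis (H∞): `f` is locally bounded. -/
def HInfty {n : ℕ} (T : Set ℝ) (Ω : Set (EuclideanSpace ℝ (Fin n)))
    (f : EuclideanSpace ℝ (Fin n) → ℝ → EuclideanSpace ℝ (Fin n)) : Prop :=
  ∀ K : Set (EuclideanSpace ℝ (Fin n)), K ⊆ Ω → IsCompact K →
    ∀ a ∈ T, ∀ b ∈ T, a < b →
      ∃ M : ℝ, 0 ≤ M ∧
        ∀ᵐ t ∂((deltaMeasure T).restrict (Ico a b ∩ T)), ∀ x ∈ K, ‖f x t‖ ≤ M

/-- Hypothesis (H^rd_loc-Lip): local Lipschitz continuity at right-dense points. -/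
def HrdLocLip {n : ℕ} (T : Set ℝ) (Ω : Set (EuclideanSpace ℝ (Fin n)))
    (f : EuclideanSpace ℝ (Fin n) → ℝ → EuclideanSpace ℝ (Fin n)) : Prop :=
  ∀ xb ∈ Ω, ∀ tb ∈ T, ¬ IsGreatest T tb → RightDense T tb →
    ∃ R > (0:ℝ), ∃ δ > (0:ℝ), ∃ L : ℝ, 0 ≤ L ∧
      Metric.closedBall xb R ⊆ Ω ∧ tb + δ ∈ T ∧
      ∀ᵐ t ∂((deltaMeasure T).restrict (Ico tb (tb + δ) ∩ T)),
        ∀ x₁ ∈ Metric.closedBall xb R, ∀ x₂ ∈ Metric.closedBall xb R,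
          ‖f x₁ t - f x₂ t‖ ≤ L * ‖x₁ - x₂‖

/-- Hypothesis (H^ld_loc-Lip): local Lipschitz continuity at left-dense points. -/
def HldLocLip {n : ℕ} (T : Set ℝ) (Ω : Set (EuclideanSpace ℝ (Fin n)))
    (f : EuclideanSpace ℝ (Fin n) → ℝ → EuclideanSpace ℝ (Fin n)) : Prop :=
  ∀ xb ∈ Ω, ∀ tb ∈ T, ¬ IsLeast T tb → LeftDense T tb →
    ∃ R > (0:ℝ), ∃ δ > (0:ℝ), ∃ L : ℝ, 0 ≤ L ∧
      Metric.closedBall xb R ⊆ Ω ∧ tb - δ ∈ T ∧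
      ∀ᵐ t ∂((deltaMeasure T).restrict (Ico (tb - δ) tb ∩ T)),
        ∀ x₁ ∈ Metric.closedBall xb R, ∀ x₂ ∈ Metric.closedBall xb R,
          ‖f x₁ t - f x₂ t‖ ≤ L * ‖x₁ - x₂‖

/-- Hypothesis (H^forw_stab): `G⁺(t) : x ↦ x + μ(t) f(x,t)` maps `Ω` into `Ω`. -/
def HforwStab {n : ℕ} (T : Set ℝ) (Ω : Set (EuclideanSpace ℝ (Fin n)))
    (f : EuclideanSpace ℝ (Fin n) → ℝ → EuclideanSpace ℝ (Fin n)) : Prop :=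
  ∀ t ∈ T, RightScattered T t → ∀ x ∈ Ω, x + tsGrain T t • f x t ∈ Ω

/-- Hypothesis (H^back_regr): `G⁺(t)` is a bijection from `Ω` onto `ℝⁿ`. -/
def HbackRegr {n : ℕ} (T : Set ℝ) (Ω : Set (EuclideanSpace ℝ (Fin n)))
    (f : EuclideanSpace ℝ (Fin n) → ℝ → EuclideanSpace ℝ (Fin n)) : Prop :=
  ∀ t ∈ T, RightScattered T t → Set.BijOn (fun x => x + tsGrain T t • f x t) Ω univ

/-- Hypothesis (H^back_stab): `G⁻(t) : x ↦ x - μ(t) f(x,t)` maps `Ω` into `Ω`. -/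
def HbackStab {n : ℕ} (T : Set ℝ) (Ω : Set (EuclideanSpace ℝ (Fin n)))
    (f : EuclideanSpace ℝ (Fin n) → ℝ → EuclideanSpace ℝ (Fin n)) : Prop :=
  ∀ t ∈ T, RightScattered T t → ∀ x ∈ Ω, x - tsGrain T t • f x t ∈ Ω

/-- Hypothesis (H^forw_regr): `G⁻(t)` is a bijection from `Ω` onto `ℝⁿ`. -/
def HforwRegr {n : ℕ} (T : Set ℝ) (Ω : Set (EuclideanSpace ℝ (Fin n)))
    (f : EuclideanSpace ℝ (Fin n) → ℝ → EuclideanSpace ℝ (Fin n)) : Prop :=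
  ∀ t ∈ T, RightScattered T t → Set.BijOn (fun x => x - tsGrain T t • f x t) Ω univ

/-- Hypothesis (H^glob_Lip): global Lipschitz continuity. -/
def HglobLip {n : ℕ} (T : Set ℝ) (Ω : Set (EuclideanSpace ℝ (Fin n)))
    (f : EuclideanSpace ℝ (Fin n) → ℝ → EuclideanSpace ℝ (Fin n)) : Prop :=
  ∃ L : ℝ, 0 ≤ L ∧
    ∀ᵐ t ∂((deltaMeasure T).restrict (tsUpDomain T)),
      ∀ x₁ ∈ Ω, ∀ x₂ ∈ Ω, ‖f x₁ t - f x₂ t‖ ≤ L * ‖x₁ - x₂‖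

/-- The relation `a ⊴ t₀ ⊴ b`. -/
def Trile (T : Set ℝ) (t₀ a b : ℝ) : Prop :=
  (IsLeast T t₀ ∧ a = t₀ ∧ t₀ < b) ∨
  (IsGreatest T t₀ ∧ a < t₀ ∧ t₀ = b) ∨
  (¬ IsLeast T t₀ ∧ ¬ IsGreatest T t₀ ∧ a < t₀ ∧ t₀ < b)

/-- `(q, [a,b]_𝕋)` is a solution of the non shifted Δ-Cauchy problem (Δ-CP). -/
def IsSolIcc {n : ℕ} (T : Set ℝ) (Ω : Set (EuclideanSpace ℝ (Fin n)))
    (f : EuclideanSpace ℝ (Fin n) → ℝ → EuclideanSpace ℝ (Fin n))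
    (t₀ : ℝ) (q₀ : EuclideanSpace ℝ (Fin n))
    (q : ℝ → EuclideanSpace ℝ (Fin n)) (a b : ℝ) : Prop :=
  (∀ t ∈ Icc a b ∩ T, q t ∈ Ω) ∧ DeltaAC T a b q ∧ q t₀ = q₀ ∧
    ∀ᵐ t ∂((deltaMeasure T).restrict (Ico a b ∩ T)),
      HasDeltaDerivAt T q (f (q t) t) t

/-- `(q, [a,b]_𝕋)` is a solution of the shifted Δ-Cauchy problem (Δ-CP^σ). -/
def IsSolIccS {n : ℕ} (T : Set ℝ) (Ω : Set (EuclideanSpace ℝ (Fin n)))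
    (f : EuclideanSpace ℝ (Fin n) → ℝ → EuclideanSpace ℝ (Fin n))
    (t₀ : ℝ) (q₀ : EuclideanSpace ℝ (Fin n))
    (q : ℝ → EuclideanSpace ℝ (Fin n)) (a b : ℝ) : Prop :=
  (∀ t ∈ Icc a b ∩ T, q t ∈ Ω) ∧ DeltaAC T a b q ∧ q t₀ = q₀ ∧
    ∀ᵐ t ∂((deltaMeasure T).restrict (Ico a b ∩ T)),
      HasDeltaDerivAt T q (f (q (tsSigma T t)) t) t

/-- `I_𝕋 ∈ 𝕀`: `I` is a real interval containing points `a, b` of `T` with `a ⊴ t₀ ⊴ b`. -/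
def MemI (T : Set ℝ) (t₀ : ℝ) (I : Set ℝ) : Prop :=
  I.OrdConnected ∧ ∃ a ∈ I ∩ T, ∃ b ∈ I ∩ T, Trile T t₀ a b

/-- `(q, I_𝕋)` is a solution of (Δ-CP). -/
def IsSol {n : ℕ} (T : Set ℝ) (Ω : Set (EuclideanSpace ℝ (Fin n)))
    (f : EuclideanSpace ℝ (Fin n) → ℝ → EuclideanSpace ℝ (Fin n))
    (t₀ : ℝ) (q₀ : EuclideanSpace ℝ (Fin n))
    (q : ℝ → EuclideanSpace ℝ (Fin n)) (I : Set ℝ) : Prop :=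
  MemI T t₀ I ∧ (∀ t ∈ I ∩ T, q t ∈ Ω) ∧
    ∀ a ∈ I ∩ T, ∀ b ∈ I ∩ T, Trile T t₀ a b → IsSolIcc T Ω f t₀ q₀ q a b

/-- `(q, I_𝕋)` is a solution of (Δ-CP^σ). -/
def IsSolS {n : ℕ} (T : Set ℝ) (Ω : Set (EuclideanSpace ℝ (Fin n)))
    (f : EuclideanSpace ℝ (Fin n) → ℝ → EuclideanSpace ℝ (Fin n))
    (t₀ : ℝ) (q₀ : EuclideanSpace ℝ (Fin n))
    (q : ℝ → EuclideanSpace ℝ (Fin n)) (I : Set ℝ) : Prop :=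
  MemI T t₀ I ∧ (∀ t ∈ I ∩ T, q t ∈ Ω) ∧
    ∀ a ∈ I ∩ T, ∀ b ∈ I ∩ T, Trile T t₀ a b → IsSolIccS T Ω f t₀ q₀ q a b

/-- `(q₁, I₁_𝕋)` is an extension of `(q, I_𝕋)`. -/
def SolExtends {n : ℕ} (T : Set ℝ) (q₁ : ℝ → EuclideanSpace ℝ (Fin n)) (I₁ : Set ℝ)
    (q : ℝ → EuclideanSpace ℝ (Fin n)) (I : Set ℝ) : Prop :=
  I ∩ T ⊆ I₁ ∩ T ∧ EqOn q₁ q (I ∩ T)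

/-- `(q, I_𝕋)` is a maximal solution of (Δ-CP). -/
def IsMaxSol {n : ℕ} (T : Set ℝ) (Ω : Set (EuclideanSpace ℝ (Fin n)))
    (f : EuclideanSpace ℝ (Fin n) → ℝ → EuclideanSpace ℝ (Fin n))
    (t₀ : ℝ) (q₀ : EuclideanSpace ℝ (Fin n))
    (q : ℝ → EuclideanSpace ℝ (Fin n)) (I : Set ℝ) : Prop :=
  IsSol T Ω f t₀ q₀ q I ∧
    ∀ q₁ I₁, IsSol T Ω f t₀ q₀ q₁ I₁ → SolExtends T q₁ I₁ q I → I₁ ∩ T = I ∩ T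

/-- `(q, I_𝕋)` is a maximal solution of (Δ-CP^σ). -/
def IsMaxSolS {n : ℕ} (T : Set ℝ) (Ω : Set (EuclideanSpace ℝ (Fin n)))
    (f : EuclideanSpace ℝ (Fin n) → ℝ → EuclideanSpace ℝ (Fin n))
    (t₀ : ℝ) (q₀ : EuclideanSpace ℝ (Fin n))
    (q : ℝ → EuclideanSpace ℝ (Fin n)) (I : Set ℝ) : Prop :=
  IsSolS T Ω f t₀ q₀ q I ∧
    ∀ q₁ I₁, IsSolS T Ω f t₀ q₀ q₁ I₁ → SolExtends T q₁ I₁ q I → I₁ ∩ T = I ∩ T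

/-! ### Elementary facts on the jump operators -/

lemma tsSigma_le {T : Set ℝ} {t s : ℝ} (hs : s ∈ T) (hts : t < s) : tsSigma T t ≤ s := by
  have hne : ({s | s ∈ T ∧ t < s}).Nonempty := ⟨s, hs, hts⟩
  rw [tsSigma, if_pos hne]
  exact csInf_le ⟨t, fun x hx => hx.2.le⟩ ⟨hs, hts⟩

lemma le_tsSigma (T : Set ℝ) (t : ℝ) : t ≤ tsSigma T t := by
  rw [tsSigma]
  split_ifs with h
  · exact le_csInf h fun x hx => hx.2.le
  · exact le_rfl

lemma tsSigma_mem {T : Set ℝ} (hT : IsClosed T) {t : ℝ} (ht : RightScattered T t) :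
    tsSigma T t ∈ T := by
  unfold RightScattered at ht
  rw [tsSigma] at ht ⊢
  split_ifs at ht ⊢ with h
  · exact hT.closure_subset_iff.2 (fun x hx => hx.1)
      (csInf_mem_closure h ⟨t, fun x hx => hx.2.le⟩)
  · exact absurd ht (lt_irrefl _)

lemma RightDense.exists_mem {T : Set ℝ} {t b : ℝ} (ht : RightDense T t) (hb : b ∈ T)
    (htb : t < b) {e : ℝ} (he : t < e) : ∃ s ∈ T, t < s ∧ s < e := by
  have hne : ({s | s ∈ T ∧ t < s}).Nonempty := ⟨b, hb, htb⟩
  rw [RightDense, tsSigma, if_pos hne] at ht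
  obtain ⟨s, hs, hse⟩ := exists_lt_of_csInf_lt hne (ht.trans_lt he)
  exact ⟨s, hs.1, hs.2, hse⟩

lemma rightScattered_or_rightDense (T : Set ℝ) (t : ℝ) : RightScattered T t ∨ RightDense T t :=
  (le_tsSigma T t).lt_or_eq.imp id Eq.symm

/-- A point of `T` that is not the minimum is either the forward jump of a right-scattered
point, or a left-dense point approached from the left by points of `T`. -/
lemma left_cases {T : Set ℝ} (hT : IsClosed T) {t a : ℝ} (ht : t ∈ T) (ha : a ∈ T) (hat : a < t) :
    (∃ r ∈ T, r < t ∧ tsSigma T r = t) ∨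
      (LeftDense T t ∧ ∀ e < t, ∃ s ∈ T, e < s ∧ s < t) := by
  have hne : ({s | s ∈ T ∧ s < t}).Nonempty := ⟨a, ha, hat⟩
  have hbdd : BddAbove {s | s ∈ T ∧ s < t} := ⟨t, fun x hx => hx.2.le⟩
  have hle : sSup {s | s ∈ T ∧ s < t} ≤ t := csSup_le hne fun x hx => hx.2.le
  rcases hle.lt_or_eq with h | h
  · left
    have hm : sSup {s | s ∈ T ∧ s < t} ∈ T :=
      hT.closure_subset_iff.2 (fun x hx => hx.1) (csSup_mem_closure hne hbdd)
    refine ⟨_, hm, h, ?_⟩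
    refine le_antisymm (tsSigma_le ht h) ?_
    rw [tsSigma, if_pos ⟨t, ht, h⟩]
    refine le_csInf ⟨t, ht, h⟩ fun x hx => ?_
    by_contra hlt
    exact absurd (le_csSup hbdd ⟨hx.1, not_le.1 hlt⟩) (not_le.2 hx.2)
  · right
    refine ⟨by rw [LeftDense, tsRho, if_pos hne, h], fun e he => ?_⟩
    obtain ⟨s, hs, hes⟩ := exists_lt_of_lt_csSup hne (h.symm ▸ he)
    exact ⟨s, hs.1, hes, hs.2⟩

lemma countable_rightScattered (T : Set ℝ) : {t | t ∈ T ∧ RightScattered T t}.Countable := by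
  refine Set.PairwiseDisjoint.countable_of_Ioo (y := tsSigma T) ?_ fun t ht => ht.2
  intro s hs t ht hst
  refine Set.disjoint_left.2 fun x hx hx' => ?_
  rcases hst.lt_or_gt with h | h
  · have := tsSigma_le ht.1 h
    linarith [hx.2, hx'.1]
  · have := tsSigma_le hs.1 h
    linarith [hx'.2, hx.1]

/-! ### The Δ-measure, Δ-derivatives and absolute continuity -/

/-- Right-scattered points are atoms, so a Δ-a.e. property holds at each of them. -/
lemma ae_delta_atom {T : Set ℝ} {S : Set ℝ} (hS : MeasurableSet S) {p : ℝ → Prop}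
    (h : ∀ᵐ t ∂((deltaMeasure T).restrict S), p t) {t : ℝ} (htS : t ∈ S) (htT : t ∈ T)
    (ht : RightScattered T t) : p t := by
  rw [ae_restrict_iff' hS, deltaMeasure, ae_add_measure_iff] at h
  have h2 := ae_mono (Measure.le_sum (fun r : {t : ℝ // t ∈ T ∧ RightScattered T t} =>
      ENNReal.ofReal (tsGrain T r.1) • Measure.dirac r.1) ⟨t, htT, ht⟩) h.2
  have hpos : ENNReal.ofReal (tsGrain T t) ≠ 0 := by
    simpa [tsGrain, RightScattered] using ht
  rw [Measure.ae_ennreal_smul_measure_eq hpos, ae_dirac_eq] at h2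
  exact h2 htS

lemma ae_delta_volume {T : Set ℝ} (hT : IsClosed T) {S : Set ℝ} (hS : MeasurableSet S)
    {p : ℝ → Prop} (h : ∀ᵐ t ∂((deltaMeasure T).restrict S), p t) :
    ∀ᵐ t : ℝ, t ∈ T → t ∈ S → p t := by
  rw [ae_restrict_iff' hS, deltaMeasure, ae_add_measure_iff] at h
  exact (ae_restrict_iff' hT.measurableSet).1 h.1

lemma HasDeltaDerivAt.sub {n : ℕ} {T : Set ℝ} {p q : ℝ → EuclideanSpace ℝ (Fin n)}
    {p' q' : EuclideanSpace ℝ (Fin n)} {t : ℝ} (hp : HasDeltaDerivAt T p p' t)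
    (hq : HasDeltaDerivAt T q q' t) :
    HasDeltaDerivAt T (fun s => p s - q s) (p' - q') t := by
  intro ε hε
  obtain ⟨U, hU, h1⟩ := hp (ε / 2) (half_pos hε)
  obtain ⟨V, hV, h2⟩ := hq (ε / 2) (half_pos hε)
  refine ⟨U ∩ V, inter_mem hU hV, fun s hs => ?_⟩
  have e1 := h1 s ⟨hs.1.1, hs.2⟩
  have e2 := h2 s ⟨hs.1.2, hs.2⟩
  have : p (tsSigma T t) - q (tsSigma T t) - (p s - q s) - (tsSigma T t - s) • (p' - q') =
      (p (tsSigma T t) - p s - (tsSigma T t - s) • p') -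
        (q (tsSigma T t) - q s - (tsSigma T t - s) • q') := by
    rw [smul_sub]; abel
  rw [this]
  refine (norm_sub_le _ _).trans ?_
  linarith

/-- At a right-scattered point the Δ-derivative is the difference quotient of the jump. -/
lemma HasDeltaDerivAt.jump {n : ℕ} {T : Set ℝ} {q : ℝ → EuclideanSpace ℝ (Fin n)}
    {q' : EuclideanSpace ℝ (Fin n)} {t : ℝ} (ht : t ∈ T)
    (h : HasDeltaDerivAt T q q' t) : q (tsSigma T t) = q t + tsGrain T t • q' := by
  have key : ∀ ε > (0:ℝ), ‖q (tsSigma T t) - q t - (tsSigma T t - t) • q'‖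
      ≤ ε * |tsSigma T t - t| := fun ε hε => by
    obtain ⟨U, hU, h1⟩ := h ε hε
    exact h1 t ⟨mem_of_mem_nhds hU, ht⟩
  have h0 : ‖q (tsSigma T t) - q t - (tsSigma T t - t) • q'‖ ≤ 0 := by
    refine le_of_forall_pos_le_add fun ε hε => ?_
    have hp : 0 < |tsSigma T t - t| + 1 := by positivity
    refine (key (ε / (|tsSigma T t - t| + 1)) (by positivity)).trans ?_
    rw [div_mul_eq_mul_div, div_le_iff₀ hp]
    nlinarith [abs_nonneg (tsSigma T t - t)]
  have h1 := norm_le_zero_iff.1 h0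
  rw [tsGrain, ← sub_eq_zero, ← h1]
  abel

/-- At a right-dense point, a Δ-derivative of norm at most `C` bounds the increments of `w`
between that point and nearby points of `T`. -/
lemma HasDeltaDerivAt.near {n : ℕ} {T : Set ℝ} {w : ℝ → EuclideanSpace ℝ (Fin n)}
    {w' : EuclideanSpace ℝ (Fin n)} {t C ε : ℝ} (h : HasDeltaDerivAt T w w' t)
    (ht : RightDense T t) (hC : ‖w'‖ ≤ C) (hε : 0 < ε) :
    ∃ η > 0, ∀ s ∈ T, |s - t| < η → ‖w t - w s‖ ≤ (C + ε) * |t - s| := by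
  obtain ⟨U, hU, h1⟩ := h ε hε
  obtain ⟨η, hη, hU'⟩ := Metric.mem_nhds_iff.1 hU
  refine ⟨η, hη, fun s hs hst => ?_⟩
  have h2 := h1 s ⟨hU' (by simpa [Real.dist_eq] using hst), hs⟩
  rw [RightDense] at ht
  rw [ht] at h2
  have h3 : w t - w s = (w t - w s - (t - s) • w') + (t - s) • w' := by abel
  rw [h3]
  refine (norm_add_le _ _).trans ?_
  rw [norm_smul, Real.norm_eq_abs]
  nlinarith [abs_nonneg (t - s)]

lemma DeltaAC.mono {n : ℕ} {T : Set ℝ} {a b c d : ℝ} {q : ℝ → EuclideanSpace ℝ (Fin n)}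
    (h : DeltaAC T a b q) (hac : a ≤ c) (hdb : d ≤ b) : DeltaAC T c d q := by
  intro ε hε
  obtain ⟨δ, hδ, h1⟩ := h ε hε
  refine ⟨δ, hδ, fun m u v hu hv => h1 m u v (fun k hk => ?_) (fun k hk => ?_)⟩
  · exact ⟨Icc_subset_Icc hac hdb (hu k hk).1, (hu k hk).2⟩
  · exact ⟨Icc_subset_Icc hac hdb (hv k hk).1, (hv k hk).2⟩

lemma DeltaAC.sub {n : ℕ} {T : Set ℝ} {a b : ℝ} {p q : ℝ → EuclideanSpace ℝ (Fin n)}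
    (hp : DeltaAC T a b p) (hq : DeltaAC T a b q) : DeltaAC T a b (fun s => p s - q s) := by
  intro ε hε
  obtain ⟨δ, hδ, h1⟩ := hp (ε / 2) (half_pos hε)
  obtain ⟨δ', hδ', h2⟩ := hq (ε / 2) (half_pos hε)
  refine ⟨min δ δ', lt_min hδ hδ', fun m u v hu hv huv hd hs => ?_⟩
  have e1 := h1 m u v hu hv huv hd (hs.trans_le (min_le_left _ _))
  have e2 := h2 m u v hu hv huv hd (hs.trans_le (min_le_right _ _))
  calc _ ≤ ∑ k ∈ Finset.range m, (‖p (v k) - p (u k)‖ + ‖q (v k) - q (u k)‖) := by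
        refine Finset.sum_le_sum fun k _ => ?_
        rw [sub_sub_sub_comm]
        exact norm_sub_le _ _
    _ < ε := by rw [Finset.sum_add_distrib]; linarith

lemma DeltaAC.near {n : ℕ} {T : Set ℝ} {a b : ℝ} {q : ℝ → EuclideanSpace ℝ (Fin n)}
    (h : DeltaAC T a b q) {ε : ℝ} (hε : 0 < ε) :
    ∃ δ > 0, ∀ s ∈ Icc a b ∩ T, ∀ t ∈ Icc a b ∩ T, |t - s| < δ → ‖q t - q s‖ < ε := by
  obtain ⟨δ, hδ, h1⟩ := h ε hε
  have key : ∀ s ∈ Icc a b ∩ T, ∀ t ∈ Icc a b ∩ T, s ≤ t → t - s < δ → ‖q t - q s‖ < ε := by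
    intro s hs t ht hst hd
    have := h1 1 (fun _ => s) (fun _ => t) (fun _ _ => hs) (fun _ _ => ht) (fun _ _ => hst)
      (fun i hi j hj hij => by omega) (by simpa using hd)
    simpa using this
  refine ⟨δ, hδ, fun s hs t ht hd => ?_⟩
  rcases le_total s t with hst | hst
  · exact key s hs t ht hst ((le_abs_self _).trans_lt hd)
  · rw [norm_sub_rev]
    exact key t ht s hs hst ((le_abs_self _).trans_lt (by rwa [abs_sub_comm]))

/-! ### The mean value inequality -/

/-- `S` is the total increment of `w` over a finite family of pairwise disjoint intervals
contained in `U` with endpoints in `J ∩ T`. -/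
def IncrFam {n : ℕ} (T U : Set ℝ) (w : ℝ → EuclideanSpace ℝ (Fin n)) (J : Set ℝ) (S : ℝ) : Prop :=
  ∃ (m : ℕ) (u v : ℕ → ℝ), (∀ k < m, u k ∈ J ∩ T) ∧ (∀ k < m, v k ∈ J ∩ T) ∧
    (∀ k < m, u k ≤ v k) ∧
    (∀ i < m, ∀ j < m, i ≠ j → Disjoint (Icc (u i) (v i)) (Icc (u j) (v j))) ∧
    (∀ k < m, Icc (u k) (v k) ⊆ U) ∧ (∑ k ∈ Finset.range m, ‖w (v k) - w (u k)‖) = S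

lemma IncrFam.mono {n : ℕ} {T U : Set ℝ} {w : ℝ → EuclideanSpace ℝ (Fin n)} {J J' : Set ℝ}
    {S : ℝ} (h : IncrFam T U w J S) (hJ : J ⊆ J') : IncrFam T U w J' S := by
  obtain ⟨m, u, v, hu, hv, h⟩ := h
  exact ⟨m, u, v, fun k hk => ⟨hJ (hu k hk).1, (hu k hk).2⟩,
    fun k hk => ⟨hJ (hv k hk).1, (hv k hk).2⟩, h⟩

lemma IncrFam.snoc {n : ℕ} {T U : Set ℝ} {w : ℝ → EuclideanSpace ℝ (Fin n)} {c x y S : ℝ}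
    (h : IncrFam T U w (Ico c x) S) (hx : x ∈ T) (hy : y ∈ T) (hcx : c ≤ x) (hxy : x ≤ y)
    (hU : Icc x y ⊆ U) : IncrFam T U w (Icc c y) (S + ‖w y - w x‖) := by
  obtain ⟨m, u, v, hu, hv, huv, hd, hsub, hS⟩ := h
  refine ⟨m + 1, fun k => if k < m then u k else x, fun k => if k < m then v k else y,
    ?_, ?_, ?_, ?_, ?_, ?_⟩
  · intro k _
    by_cases hk : k < m
    · simp only [hk, if_true]
      exact ⟨⟨(hu k hk).1.1, (hu k hk).1.2.le.trans hxy⟩, (hu k hk).2⟩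
    · simp only [hk, if_false]
      exact ⟨⟨hcx, hxy⟩, hx⟩
  · intro k _
    by_cases hk : k < m
    · simp only [hk, if_true]
      exact ⟨⟨(hv k hk).1.1, (hv k hk).1.2.le.trans hxy⟩, (hv k hk).2⟩
    · simp only [hk, if_false]
      exact ⟨⟨hcx.trans hxy, le_rfl⟩, hy⟩
  · intro k _
    by_cases hk : k < m
    · simp only [hk, if_true]; exact huv k hk
    · simp only [hk, if_false]; exact hxy
  · intro i hi j hj hij
    by_cases hi' : i < m <;> by_cases hj' : j < m
    · simp only [hi', hj', if_true]; exact hd i hi' j hj' hij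
    · simp only [hi', hj', if_true, if_false]
      exact Set.disjoint_left.2 fun z hz hz' => by linarith [hz.2, hz'.1, (hv i hi').1.2]
    · simp only [hi', hj', if_true, if_false]
      exact Set.disjoint_left.2 fun z hz hz' => by linarith [hz.1, hz'.2, (hv j hj').1.2]
    · omega
  · intro k _
    by_cases hk : k < m
    · simp only [hk, if_true]; exact hsub k hk
    · simp only [hk, if_false]; exact hU
  · rw [Finset.sum_range_succ]
    simp only [lt_irrefl, if_false]
    rw [← hS]
    congr 1
    refine Finset.sum_congr rfl fun k hk => ?_
    simp only [Finset.mem_range.1 hk, if_true]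

lemma IncrFam.lt_of_volume_lt {n : ℕ} {T U : Set ℝ} {w : ℝ → EuclideanSpace ℝ (Fin n)}
    {c d S ε δ : ℝ} (h : IncrFam T U w (Icc c d) S)
    (hδ : ∀ (m : ℕ) (u v : ℕ → ℝ),
      (∀ k < m, u k ∈ Icc c d ∩ T) → (∀ k < m, v k ∈ Icc c d ∩ T) →
      (∀ k < m, u k ≤ v k) →
      (∀ i < m, ∀ j < m, i ≠ j → Disjoint (Icc (u i) (v i)) (Icc (u j) (v j))) →
      (∑ k ∈ Finset.range m, (v k - u k)) < δ →
      (∑ k ∈ Finset.range m, ‖w (v k) - w (u k)‖) < ε)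
    (hU : volume U < ENNReal.ofReal δ) : S < ε := by
  obtain ⟨m, u, v, hu, hv, huv, hd, hsub, rfl⟩ := h
  refine hδ m u v hu hv huv hd ?_
  have h1 : ENNReal.ofReal (∑ k ∈ Finset.range m, (v k - u k)) ≤ volume U := by
    rw [ENNReal.ofReal_sum_of_nonneg fun k hk => sub_nonneg.2 (huv k (Finset.mem_range.1 hk))]
    simp only [← Real.volume_Icc]
    rw [← measure_biUnion_finset]
    · exact measure_mono (Set.iUnion₂_subset fun k hk => hsub k (Finset.mem_range.1 hk))
    · intro i hi j hj hij
      exact hd i (Finset.mem_range.1 hi) j (Finset.mem_range.1 hj) hij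
    · exact fun k _ => measurableSet_Icc
  exact (ENNReal.ofReal_lt_ofReal_iff_of_nonneg
    (Finset.sum_nonneg fun k hk => sub_nonneg.2 (huv k (Finset.mem_range.1 hk)))).1
    (h1.trans_lt hU)

/-- `t` is reached from `c` by a finite chain of points of `T`, whose steps either have slope
at most `K` or lie inside `U`. The point `x` is the start of the current run of steps inside `U`
(`x = t` if there is none); consecutive steps inside `U` are merged, so that the recorded
intervals are pairwise disjoint as closed intervals. -/
def Reached {n : ℕ} (T U : Set ℝ) (w : ℝ → EuclideanSpace ℝ (Fin n)) (K c t : ℝ) : Prop :=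
  ∃ x ∈ T, c ≤ x ∧ x ≤ t ∧ (x = t ∨ Icc x t ⊆ U) ∧
    ∃ S, IncrFam T U w (Ico c x) S ∧ ‖w x - w c‖ ≤ K * (x - c) + S

lemma Reached.total {n : ℕ} {T U : Set ℝ} {w : ℝ → EuclideanSpace ℝ (Fin n)} {K c t : ℝ}
    (h : Reached T U w K c t) (ht : t ∈ T) (hK : 0 ≤ K) :
    ∃ S, IncrFam T U w (Icc c t) S ∧ ‖w t - w c‖ ≤ K * (t - c) + S := by
  obtain ⟨x, hx, hcx, hxt, hor, S, hS, hb⟩ := h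
  rcases hor with rfl | hU
  · exact ⟨S, hS.mono Ico_subset_Icc_self, hb⟩
  · refine ⟨_, hS.snoc hx ht hcx hxt hU, ?_⟩
    have h1 : w t - w c = (w t - w x) + (w x - w c) := by abel
    rw [h1]
    refine (norm_add_le _ _).trans ?_
    nlinarith

lemma Reached.step_slope {n : ℕ} {T U : Set ℝ} {w : ℝ → EuclideanSpace ℝ (Fin n)} {K c s t : ℝ}
    (h : Reached T U w K c s) (hs : s ∈ T) (ht : t ∈ T) (hK : 0 ≤ K) (hst : s < t)
    (hw : ‖w t - w s‖ ≤ K * (t - s)) : Reached T U w K c t := by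
  have hcs : c ≤ s := by
    obtain ⟨x, _, h1, h2, _⟩ := h
    exact h1.trans h2
  obtain ⟨S, hS, hb⟩ := h.total hs hK
  refine ⟨t, ht, hcs.trans hst.le, le_rfl, Or.inl rfl, S,
    hS.mono fun z hz => ⟨hz.1, hz.2.trans_lt hst⟩, ?_⟩
  have h1 : w t - w c = (w t - w s) + (w s - w c) := by abel
  rw [h1]
  refine (norm_add_le _ _).trans ?_
  nlinarith

lemma Reached.step_subset {n : ℕ} {T U : Set ℝ} {w : ℝ → EuclideanSpace ℝ (Fin n)}
    {K c s t : ℝ} (h : Reached T U w K c s) (hst : s ≤ t) (hU : Icc s t ⊆ U) :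
    Reached T U w K c t := by
  obtain ⟨x, hx, hcx, hxs, hor, h'⟩ := h
  refine ⟨x, hx, hcx, hxs.trans hst, Or.inr ?_, h'⟩
  rcases hor with rfl | hU'
  · exact hU
  · rw [← Icc_union_Icc_eq_Icc hxs hst]
    exact union_subset hU' hU

/-- If `U` contains every point of `[c,d]_𝕋` that is not right-dense with a good derivative, then
`d` is reached: the supremum of the reached points is itself reached, and if it were less than
`d` a further step to the right would be possible. -/
lemma reached_right {n : ℕ} {T U : Set ℝ} (hT : IsClosed T) (hUo : IsOpen U)
    {w : ℝ → EuclideanSpace ℝ (Fin n)} {C ε c d : ℝ} (hc : c ∈ T) (hd : d ∈ T) (hcd : c ≤ d)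
    (hC : 0 ≤ C) (hε : 0 < ε)
    (hscat : ∀ t ∈ Ico c d ∩ T, RightScattered T t →
      ∃ w', HasDeltaDerivAt T w w' t ∧ ‖w'‖ ≤ C)
    (hgood : ∀ t ∈ Icc c d ∩ T, t ∉ U →
      RightDense T t ∧ ∃ w', HasDeltaDerivAt T w w' t ∧ ‖w'‖ ≤ C) :
    Reached T U w (C + ε) c d := by
  have hK : 0 ≤ C + ε := by linarith
  -- Around every point of `[c,d]_𝕋` one of the two kinds of step is available to and from all
  -- nearby points of `T`; the jump at a right-scattered point is treated separately below.
  have hloc : ∀ t ∈ Icc c d ∩ T, ∃ η > 0, ∀ s ∈ T, |s - t| < η →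
      (‖w t - w s‖ ≤ (C + ε) * |t - s| ∨ (∀ z, |z - t| < η → z ∈ U)) := by
    intro t ht
    by_cases htU : t ∈ U
    · obtain ⟨η, hη, hU'⟩ := Metric.isOpen_iff.1 hUo t htU
      exact ⟨η, hη, fun s _ _ => Or.inr fun z hz => hU' (by simpa [Real.dist_eq] using hz)⟩
    · obtain ⟨h1, w', h2, h3⟩ := hgood t ht htU
      obtain ⟨η, hη, h4⟩ := h2.near h1 h3 hε
      exact ⟨η, hη, fun s hs hst => Or.inl (h4 s hs hst)⟩
  set A := {t | t ∈ Icc c d ∩ T ∧ Reached T U w (C + ε) c t} with hA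
  have hcA : c ∈ A := by
    refine ⟨⟨⟨le_rfl, hcd⟩, hc⟩, c, hc, le_rfl, le_rfl, Or.inl rfl, 0,
      ⟨0, fun _ => 0, fun _ => 0, ?_⟩, ?_⟩
    · simp
    · simp
  have hbdd : BddAbove A := ⟨d, fun x hx => hx.1.1.2⟩
  have hτ : sSup A ∈ Icc c d ∩ T :=
    (isClosed_Icc.inter hT).closure_subset_iff.2 (fun x hx => hx.1)
      (csSup_mem_closure ⟨c, hcA⟩ hbdd)
  set τ := sSup A with hτdef
  obtain ⟨η, hη, hstep⟩ := hloc τ hτ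
  have hτR : Reached T U w (C + ε) c τ := by
    obtain ⟨s, hsA, hs⟩ := exists_lt_of_lt_csSup ⟨c, hcA⟩ (show τ - η < sSup A by linarith)
    have hsτ : s ≤ τ := le_csSup hbdd hsA
    rcases hsτ.lt_or_eq with hlt | heq
    · rcases hstep s hsA.1.2 (by rw [abs_lt]; constructor <;> linarith) with h | h
      · refine hsA.2.step_slope hsA.1.2 hτ.2 hK hlt ?_
        rwa [abs_of_pos (by linarith)] at h
      · exact hsA.2.step_subset hsτ fun z hz => h z (by
          rw [abs_lt]; constructor <;> linarith [hz.1, hz.2])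
    · rw [← heq]; exact hsA.2
  rcases hτ.1.2.lt_or_eq with hlt | heq
  · exfalso
    obtain ⟨s, hsT, hτs, hsd, hR⟩ : ∃ s ∈ T, τ < s ∧ s ≤ d ∧ Reached T U w (C + ε) c s := by
      rcases rightScattered_or_rightDense T τ with hsc | hrd
      · obtain ⟨w', h1, h2⟩ := hscat τ ⟨⟨hτ.1.1, hlt⟩, hτ.2⟩ hsc
        refine ⟨_, tsSigma_mem hT hsc, hsc, tsSigma_le hd hlt, ?_⟩
        refine hτR.step_slope hτ.2 (tsSigma_mem hT hsc) hK hsc ?_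
        have hg : 0 < tsGrain T τ := sub_pos.2 hsc
        rw [h1.jump hτ.2, add_sub_cancel_left, norm_smul, Real.norm_eq_abs, abs_of_pos hg,
          ← tsGrain]
        nlinarith
      · obtain ⟨s, hsT, hs1, hs2⟩ := hrd.exists_mem hd hlt
          (e := min d (τ + η)) (lt_min hlt (by linarith))
        have hsd := hs2.trans_le (min_le_left _ _)
        have hsη := hs2.trans_le (min_le_right _ _)
        refine ⟨s, hsT, hs1, hsd.le, ?_⟩
        rcases hstep s hsT (by rw [abs_lt]; constructor <;> linarith) with h | h
        · refine hτR.step_slope hτ.2 hsT hK hs1 ?_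
          rwa [norm_sub_rev, abs_sub_comm, abs_of_pos (by linarith)] at h
        · exact hτR.step_subset hs1.le fun z hz => h z (by
            rw [abs_lt]; constructor <;> linarith [hz.1, hz.2])
    exact absurd (le_csSup hbdd ⟨⟨⟨hτ.1.1.trans hτs.le, hsd⟩, hsT⟩, hR⟩) (not_le.2 hτs)
  · rw [← heq]; exact hτR

/-- Mean value inequality: an absolutely continuous function on `[c,d]_𝕋` whose Δ-derivative
is Δ-a.e. bounded by `C` satisfies `‖w d - w c‖ ≤ C (d - c)`. -/
lemma DeltaAC.norm_sub_le {n : ℕ} {T : Set ℝ} (hT : IsClosed T)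
    {w : ℝ → EuclideanSpace ℝ (Fin n)} {C c d : ℝ} (hc : c ∈ T) (hd : d ∈ T) (hcd : c ≤ d)
    (hC : 0 ≤ C) (hw : DeltaAC T c d w)
    (hder : ∀ᵐ t ∂((deltaMeasure T).restrict (Ico c d ∩ T)),
      ∃ w', HasDeltaDerivAt T w w' t ∧ ‖w'‖ ≤ C) :
    ‖w d - w c‖ ≤ C * (d - c) := by
  have hmeas : MeasurableSet (Ico c d ∩ T) := measurableSet_Ico.inter hT.measurableSet
  have key : ∀ ε > 0, ‖w d - w c‖ ≤ C * (d - c) + ε * (d - c + 1) := by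
    intro ε hε
    obtain ⟨δ, hδ, hAC⟩ := hw ε hε
    -- The exceptional set: points without a good derivative, right-scattered points (where the
    -- derivative carries no information on the left), and the endpoint `d`.
    set N : Set ℝ := {t | ¬ (t ∈ T → t ∈ Ico c d ∩ T →
      ∃ w', HasDeltaDerivAt T w w' t ∧ ‖w'‖ ≤ C)} ∪
        ({t | t ∈ T ∧ RightScattered T t} ∪ {d}) with hN
    have hN0 : volume N = 0 := by
      refine measure_union_null (ae_delta_volume hT hmeas hder) (measure_union_null ?_ (by simp))
      exact (countable_rightScattered T).measure_zero _
    obtain ⟨U, hNU, hUo, hUv⟩ := N.exists_isOpen_lt_of_lt (μ := volume) (ENNReal.ofReal δ)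
      (by rw [hN0]; exact ENNReal.ofReal_pos.2 hδ)
    have hR : Reached T U w (C + ε) c d := by
      refine reached_right hT hUo hc hd hcd hC hε
        (fun t ht hs => ae_delta_atom hmeas hder ht ht.2 hs) fun t ht htU => ?_
      have htN : t ∉ N := fun h => htU (hNU h)
      simp only [hN, mem_union, not_or, mem_ofPred_eq, not_not, mem_singleton_iff] at htN
      obtain ⟨h1, h2, h3⟩ := htN
      refine ⟨(rightScattered_or_rightDense T t).resolve_left fun h => h2 ⟨ht.2, h⟩, ?_⟩
      exact h1 ht.2 ⟨⟨ht.1.1, lt_of_le_of_ne ht.1.2 h3⟩, ht.2⟩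
    obtain ⟨S, hS, hb⟩ := hR.total hd (by linarith)
    have := hS.lt_of_volume_lt hAC hUv
    linarith
  have hp : 0 < d - c + 1 := by linarith
  refine le_of_forall_pos_le_add fun ε hε => ?_
  have := key (ε / (d - c + 1)) (by positivity)
  rwa [div_mul_cancel₀ _ hp.ne'] at this

/-! ### Local uniqueness -/

/-- Two solutions that stay in a ball where `f` is `L`-Lipschitz and agree at some point of
`[c,d]_𝕋` agree on `[c,d]_𝕋` when `L (d - c)` is small: the supremum of `‖q₁ - q₂‖` is at most
half of itself. -/
lemma eq_of_small {n : ℕ} {T : Set ℝ} (hT : IsClosed T)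
    {f : EuclideanSpace ℝ (Fin n) → ℝ → EuclideanSpace ℝ (Fin n)}
    {q₁ q₂ : ℝ → EuclideanSpace ℝ (Fin n)} {c d e L R : ℝ} {x : EuclideanSpace ℝ (Fin n)}
    (he : e ∈ Icc c d ∩ T) (hL : 0 ≤ L) (hLd : L * (d - c) ≤ 1 / 2)
    (hball₁ : ∀ t ∈ Icc c d ∩ T, q₁ t ∈ Metric.closedBall x R)
    (hball₂ : ∀ t ∈ Icc c d ∩ T, q₂ t ∈ Metric.closedBall x R)
    (hac₁ : DeltaAC T c d q₁) (hac₂ : DeltaAC T c d q₂)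
    (hd₁ : ∀ᵐ t ∂((deltaMeasure T).restrict (Ico c d ∩ T)), HasDeltaDerivAt T q₁ (f (q₁ t) t) t)
    (hd₂ : ∀ᵐ t ∂((deltaMeasure T).restrict (Ico c d ∩ T)), HasDeltaDerivAt T q₂ (f (q₂ t) t) t)
    (hlip : ∀ᵐ t ∂((deltaMeasure T).restrict (Ico c d ∩ T)),
        ∀ x₁ ∈ Metric.closedBall x R, ∀ x₂ ∈ Metric.closedBall x R,
          ‖f x₁ t - f x₂ t‖ ≤ L * ‖x₁ - x₂‖)
    (heq : q₁ e = q₂ e) : ∀ t ∈ Icc c d ∩ T, q₁ t = q₂ t := by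
  set B := (fun t => ‖q₁ t - q₂ t‖) '' (Icc c d ∩ T) with hB
  have hbdd : BddAbove B := by
    refine ⟨R + R, ?_⟩
    rintro _ ⟨t, ht, rfl⟩
    have h1 := hball₁ t ht
    have h2 := hball₂ t ht
    have h3 := dist_triangle_right (q₁ t) (q₂ t) x
    rw [Metric.mem_closedBall] at h1 h2
    rw [dist_eq_norm] at h3
    show ‖q₁ t - q₂ t‖ ≤ R + R
    linarith
  have hle : ∀ t ∈ Icc c d ∩ T, ‖q₁ t - q₂ t‖ ≤ sSup B := fun t ht => le_csSup hbdd ⟨t, ht, rfl⟩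
  have hS : 0 ≤ sSup B := (norm_nonneg _).trans (hle e he)
  have hmeas : MeasurableSet (Ico c d ∩ T) := measurableSet_Ico.inter hT.measurableSet
  have hder : ∀ᵐ t ∂((deltaMeasure T).restrict (Ico c d ∩ T)),
      ∃ w', HasDeltaDerivAt T (fun s => q₁ s - q₂ s) w' t ∧ ‖w'‖ ≤ L * sSup B := by
    filter_upwards [hd₁, hd₂, hlip, ae_restrict_mem hmeas] with t h1 h2 h3 ht
    have ht' : t ∈ Icc c d ∩ T := ⟨Ico_subset_Icc_self ht.1, ht.2⟩
    exact ⟨_, h1.sub h2, (h3 _ (hball₁ t ht') _ (hball₂ t ht')).trans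
      (mul_le_mul_of_nonneg_left (hle t ht') hL)⟩
  have hmv : ∀ s ∈ Icc c d ∩ T, ∀ t ∈ Icc c d ∩ T, s ≤ t →
      ‖(q₁ t - q₂ t) - (q₁ s - q₂ s)‖ ≤ sSup B / 2 := by
    intro s hs t ht hst
    have h1 := ((hac₁.sub hac₂).mono hs.1.1 ht.1.2).norm_sub_le hT hs.2 ht.2 hst
      (mul_nonneg hL hS) (ae_mono (Measure.restrict_mono
        (inter_subset_inter_left _ (Ico_subset_Ico hs.1.1 ht.1.2)) le_rfl) hder)
    refine h1.trans ?_
    have h2 : L * (t - s) ≤ 1 / 2 := (mul_le_mul_of_nonneg_left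
      (by linarith [hs.1.1, ht.1.2]) hL).trans hLd
    nlinarith
  have hhalf : ∀ t ∈ Icc c d ∩ T, ‖q₁ t - q₂ t‖ ≤ sSup B / 2 := by
    intro t ht
    rcases le_total e t with h | h
    · simpa [heq] using hmv e he t ht h
    · simpa [heq, norm_sub_rev] using hmv t ht e he h
  have hS0 : sSup B ≤ sSup B / 2 := by
    refine csSup_le ⟨_, e, he, rfl⟩ ?_
    rintro _ ⟨t, ht, rfl⟩
    exact hhalf t ht
  intro t ht
  rw [← sub_eq_zero, ← norm_le_zero_iff]
  linarith [hle t ht]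

/-- Two absolutely continuous functions agreeing at points arbitrarily close to `τ` agree
at `τ`. -/
lemma DeltaAC.eq_of_approx {n : ℕ} {T : Set ℝ} {a b τ : ℝ}
    {q₁ q₂ : ℝ → EuclideanSpace ℝ (Fin n)} (hac₁ : DeltaAC T a b q₁) (hac₂ : DeltaAC T a b q₂)
    (hτ : τ ∈ Icc a b ∩ T) (h : ∀ η > 0, ∃ s ∈ Icc a b ∩ T, |s - τ| < η ∧ q₁ s = q₂ s) :
    q₁ τ = q₂ τ := by
  rw [← sub_eq_zero, ← norm_le_zero_iff]
  refine le_of_forall_pos_le_add fun ε hε => ?_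
  obtain ⟨δ, hδ, h1⟩ := (hac₁.sub hac₂).near hε
  obtain ⟨s, hs, hd, heq⟩ := h δ hδ
  have := h1 τ hτ s hs hd
  rw [norm_sub_rev] at this
  simp only [heq, sub_self, sub_zero] at this
  linarith

lemma unique_forward {n : ℕ} {T : Set ℝ} (hT : IsClosed T)
    {Ω : Set (EuclideanSpace ℝ (Fin n))}
    {f : EuclideanSpace ℝ (Fin n) → ℝ → EuclideanSpace ℝ (Fin n)} (hlip : HrdLocLip T Ω f)
    {q₁ q₂ : ℝ → EuclideanSpace ℝ (Fin n)} {a b : ℝ} (ha : a ∈ T) (hb : b ∈ T) (hab : a ≤ b)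
    (hΩ : ∀ t ∈ Icc a b ∩ T, q₁ t ∈ Ω)
    (hac₁ : DeltaAC T a b q₁) (hac₂ : DeltaAC T a b q₂)
    (hd₁ : ∀ᵐ t ∂((deltaMeasure T).restrict (Ico a b ∩ T)), HasDeltaDerivAt T q₁ (f (q₁ t) t) t)
    (hd₂ : ∀ᵐ t ∂((deltaMeasure T).restrict (Ico a b ∩ T)), HasDeltaDerivAt T q₂ (f (q₂ t) t) t)
    (heq : q₁ a = q₂ a) : q₁ b = q₂ b := by
  have hmeas : MeasurableSet (Ico a b ∩ T) := measurableSet_Ico.inter hT.measurableSet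
  set A := {t | t ∈ Icc a b ∩ T ∧ q₁ t = q₂ t} with hA
  have haA : a ∈ A := ⟨⟨⟨le_rfl, hab⟩, ha⟩, heq⟩
  have hbdd : BddAbove A := ⟨b, fun x hx => hx.1.1.2⟩
  have hτ : sSup A ∈ Icc a b ∩ T :=
    (isClosed_Icc.inter hT).closure_subset_iff.2 (fun x hx => hx.1)
      (csSup_mem_closure ⟨a, haA⟩ hbdd)
  set τ := sSup A with hτdef
  have hτeq : q₁ τ = q₂ τ := by
    refine hac₁.eq_of_approx hac₂ hτ fun η hη => ?_
    obtain ⟨s, hsA, hs⟩ := exists_lt_of_lt_csSup ⟨a, haA⟩ (show τ - η < sSup A by linarith)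
    have hsτ : s ≤ τ := le_csSup hbdd hsA
    exact ⟨s, hsA.1, by rw [abs_lt]; constructor <;> linarith, hsA.2⟩
  rcases hτ.1.2.lt_or_eq with hlt | hτb
  swap
  · rwa [hτb] at hτeq
  exfalso
  obtain ⟨s, hs, hτs, hse⟩ : ∃ s ∈ Icc a b ∩ T, τ < s ∧ q₁ s = q₂ s := by
    rcases rightScattered_or_rightDense T τ with hsc | hrd
    · have hm : τ ∈ Ico a b ∩ T := ⟨⟨hτ.1.1, hlt⟩, hτ.2⟩
      refine ⟨_, ⟨⟨hτ.1.1.trans (le_tsSigma T τ), tsSigma_le hb hlt⟩, tsSigma_mem hT hsc⟩,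
        hsc, ?_⟩
      rw [(ae_delta_atom hmeas hd₁ hm hτ.2 hsc).jump hτ.2,
        (ae_delta_atom hmeas hd₂ hm hτ.2 hsc).jump hτ.2, hτeq]
    · obtain ⟨R, hR, δ, hδ, L, hL, -, -, hl⟩ := hlip (q₁ τ) (hΩ τ hτ) τ hτ.2
        (fun h => absurd (h.2 hb) (not_le.2 hlt)) hrd
      obtain ⟨η₁, hη₁, hn₁⟩ := hac₁.near hR
      obtain ⟨η₂, hη₂, hn₂⟩ := hac₂.near hR
      have hκ : 0 < 1 / (2 * (L + 1)) := by positivity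
      obtain ⟨d, hdT, hτd, hd⟩ := hrd.exists_mem hb hlt
        (e := min b (τ + min (min δ (1 / (2 * (L + 1)))) (min η₁ η₂)))
        (lt_min hlt (by
          have : 0 < min (min δ (1 / (2 * (L + 1)))) (min η₁ η₂) :=
            lt_min (lt_min hδ hκ) (lt_min hη₁ hη₂)
          linarith))
      simp only [lt_min_iff, ← sub_lt_iff_lt_add'] at hd
      obtain ⟨hdb, ⟨hdδ, hdκ⟩, hdη₁, hdη₂⟩ := hd
      have hsub : Ico τ d ∩ T ⊆ Ico a b ∩ T :=
        inter_subset_inter_left _ (Ico_subset_Ico hτ.1.1 hdb.le)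
      have hmemab : ∀ t ∈ Icc τ d ∩ T, t ∈ Icc a b ∩ T := fun t ht =>
        ⟨⟨hτ.1.1.trans ht.1.1, ht.1.2.trans hdb.le⟩, ht.2⟩
      refine ⟨d, hmemab d ⟨⟨hτd.le, le_rfl⟩, hdT⟩, hτd, ?_⟩
      refine eq_of_small hT (f := f) (x := q₁ τ) (R := R) (L := L) (c := τ) (d := d) (e := τ)
        ⟨⟨le_rfl, hτd.le⟩, hτ.2⟩ hL ?_ (fun t ht => ?_) (fun t ht => ?_)
        (hac₁.mono hτ.1.1 hdb.le) (hac₂.mono hτ.1.1 hdb.le)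
        (ae_mono (Measure.restrict_mono hsub le_rfl) hd₁)
        (ae_mono (Measure.restrict_mono hsub le_rfl) hd₂)
        (ae_mono (Measure.restrict_mono (inter_subset_inter_left _
          (Ico_subset_Ico le_rfl (by linarith))) le_rfl) hl) hτeq d ⟨⟨hτd.le, le_rfl⟩, hdT⟩
      · rw [lt_div_iff₀ (by positivity)] at hdκ
        nlinarith
      · rw [mem_closedBall_iff_norm]
        exact (hn₁ τ hτ t (hmemab t ht) (by
          rw [abs_lt]; constructor <;> linarith [ht.1.1, ht.1.2])).le
      · rw [mem_closedBall_iff_norm, hτeq]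
        exact (hn₂ τ hτ t (hmemab t ht) (by
          rw [abs_lt]; constructor <;> linarith [ht.1.1, ht.1.2])).le
  exact absurd (le_csSup hbdd ⟨hs, hse⟩) (not_le.2 hτs)

lemma unique_backward {n : ℕ} {T : Set ℝ} (hT : IsClosed T)
    {Ω : Set (EuclideanSpace ℝ (Fin n))}
    {f : EuclideanSpace ℝ (Fin n) → ℝ → EuclideanSpace ℝ (Fin n)} (hlip : HldLocLip T Ω f)
    (hreg : HbackRegr T Ω f)
    {q₁ q₂ : ℝ → EuclideanSpace ℝ (Fin n)} {a b : ℝ} (ha : a ∈ T) (hb : b ∈ T) (hab : a ≤ b)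
    (hΩ₁ : ∀ t ∈ Icc a b ∩ T, q₁ t ∈ Ω) (hΩ₂ : ∀ t ∈ Icc a b ∩ T, q₂ t ∈ Ω)
    (hac₁ : DeltaAC T a b q₁) (hac₂ : DeltaAC T a b q₂)
    (hd₁ : ∀ᵐ t ∂((deltaMeasure T).restrict (Ico a b ∩ T)), HasDeltaDerivAt T q₁ (f (q₁ t) t) t)
    (hd₂ : ∀ᵐ t ∂((deltaMeasure T).restrict (Ico a b ∩ T)), HasDeltaDerivAt T q₂ (f (q₂ t) t) t)
    (heq : q₁ b = q₂ b) : q₁ a = q₂ a := by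
  have hmeas : MeasurableSet (Ico a b ∩ T) := measurableSet_Ico.inter hT.measurableSet
  set A := {t | t ∈ Icc a b ∩ T ∧ q₁ t = q₂ t} with hA
  have hbA : b ∈ A := ⟨⟨⟨hab, le_rfl⟩, hb⟩, heq⟩
  have hbdd : BddBelow A := ⟨a, fun x hx => hx.1.1.1⟩
  have hτ : sInf A ∈ Icc a b ∩ T :=
    (isClosed_Icc.inter hT).closure_subset_iff.2 (fun x hx => hx.1)
      (csInf_mem_closure ⟨b, hbA⟩ hbdd)
  set τ := sInf A with hτdef
  have hτeq : q₁ τ = q₂ τ := by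
    refine hac₁.eq_of_approx hac₂ hτ fun η hη => ?_
    obtain ⟨s, hsA, hs⟩ := exists_lt_of_csInf_lt ⟨b, hbA⟩ (show sInf A < τ + η by linarith)
    have hsτ : τ ≤ s := csInf_le hbdd hsA
    exact ⟨s, hsA.1, by rw [abs_lt]; constructor <;> linarith, hsA.2⟩
  rcases hτ.1.1.lt_or_eq with hlt | hτa
  swap
  · rwa [← hτa] at hτeq
  exfalso
  obtain ⟨s, hs, hτs, hse⟩ : ∃ s ∈ Icc a b ∩ T, s < τ ∧ q₁ s = q₂ s := by
    rcases left_cases hT hτ.2 ha hlt with ⟨r, hrT, hrτ, hσ⟩ | ⟨hld, hex⟩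
    · have har : a ≤ r := by
        by_contra h
        exact absurd (tsSigma_le ha (not_le.1 h)) (by rw [hσ]; exact not_le.2 hlt)
      have hsc : RightScattered T r := by rw [RightScattered, hσ]; exact hrτ
      have hm : r ∈ Ico a b ∩ T := ⟨⟨har, hrτ.trans_le hτ.1.2⟩, hrT⟩
      have hm' : r ∈ Icc a b ∩ T := ⟨Ico_subset_Icc_self hm.1, hrT⟩
      refine ⟨r, hm', hrτ, (hreg r hrT hsc).injOn (hΩ₁ r hm') (hΩ₂ r hm') ?_⟩
      have e1 := (ae_delta_atom hmeas hd₁ hm hrT hsc).jump hrT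
      have e2 := (ae_delta_atom hmeas hd₂ hm hrT hsc).jump hrT
      rw [hσ] at e1 e2
      show q₁ r + tsGrain T r • f (q₁ r) r = q₂ r + tsGrain T r • f (q₂ r) r
      rw [← e1, ← e2, hτeq]
    · obtain ⟨R, hR, δ, hδ, L, hL, -, -, hl⟩ := hlip (q₁ τ) (hΩ₁ τ hτ) τ hτ.2
        (fun h => absurd (h.2 ha) (not_le.2 hlt)) hld
      obtain ⟨η₁, hη₁, hn₁⟩ := hac₁.near hR
      obtain ⟨η₂, hη₂, hn₂⟩ := hac₂.near hR
      have hκ : 0 < 1 / (2 * (L + 1)) := by positivity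
      obtain ⟨c, hcT, hc, hcτ⟩ := hex
        (max a (τ - min (min δ (1 / (2 * (L + 1)))) (min η₁ η₂)))
        (max_lt hlt (by
          have : 0 < min (min δ (1 / (2 * (L + 1)))) (min η₁ η₂) :=
            lt_min (lt_min hδ hκ) (lt_min hη₁ hη₂)
          linarith))
      rw [max_lt_iff, sub_lt_comm] at hc
      simp only [lt_min_iff] at hc
      obtain ⟨hac, ⟨hdδ, hdκ⟩, hdη₁, hdη₂⟩ := hc
      have hsub : Ico c τ ∩ T ⊆ Ico a b ∩ T :=
        inter_subset_inter_left _ (Ico_subset_Ico hac.le hτ.1.2)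
      have hmemab : ∀ t ∈ Icc c τ ∩ T, t ∈ Icc a b ∩ T := fun t ht =>
        ⟨⟨hac.le.trans ht.1.1, ht.1.2.trans hτ.1.2⟩, ht.2⟩
      refine ⟨c, hmemab c ⟨⟨le_rfl, hcτ.le⟩, hcT⟩, hcτ, ?_⟩
      refine eq_of_small hT (f := f) (x := q₁ τ) (R := R) (L := L) (c := c) (d := τ) (e := τ)
        ⟨⟨hcτ.le, le_rfl⟩, hτ.2⟩ hL ?_ (fun t ht => ?_) (fun t ht => ?_)
        (hac₁.mono hac.le hτ.1.2) (hac₂.mono hac.le hτ.1.2)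
        (ae_mono (Measure.restrict_mono hsub le_rfl) hd₁)
        (ae_mono (Measure.restrict_mono hsub le_rfl) hd₂)
        (ae_mono (Measure.restrict_mono (inter_subset_inter_left _
          (Ico_subset_Ico (by linarith) le_rfl)) le_rfl) hl) hτeq c ⟨⟨le_rfl, hcτ.le⟩, hcT⟩
      · rw [lt_div_iff₀ (by positivity)] at hdκ
        nlinarith
      · rw [mem_closedBall_iff_norm]
        exact (hn₁ τ hτ t (hmemab t ht) (by
          rw [abs_lt]; constructor <;> linarith [ht.1.1, ht.1.2])).le
      · rw [mem_closedBall_iff_norm, hτeq]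
        exact (hn₂ τ hτ t (hmemab t ht) (by
          rw [abs_lt]; constructor <;> linarith [ht.1.1, ht.1.2])).le
  exact absurd (csInf_le hbdd ⟨hs, hse⟩) (not_le.2 hτs)

lemma IsSol.initial {n : ℕ} {T : Set ℝ} {Ω : Set (EuclideanSpace ℝ (Fin n))}
    {f : EuclideanSpace ℝ (Fin n) → ℝ → EuclideanSpace ℝ (Fin n)} {t₀ : ℝ}
    {q₀ : EuclideanSpace ℝ (Fin n)} {q : ℝ → EuclideanSpace ℝ (Fin n)} {I : Set ℝ}
    (h : IsSol T Ω f t₀ q₀ q I) : q t₀ = q₀ := by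
  obtain ⟨⟨-, a, ha, b, hb, hab⟩, -, h⟩ := h
  exact (h a ha b hb hab).2.2.1

lemma IsSol.right {n : ℕ} {T : Set ℝ} {Ω : Set (EuclideanSpace ℝ (Fin n))}
    {f : EuclideanSpace ℝ (Fin n) → ℝ → EuclideanSpace ℝ (Fin n)} {t₀ : ℝ}
    {q₀ : EuclideanSpace ℝ (Fin n)} {q : ℝ → EuclideanSpace ℝ (Fin n)} {I : Set ℝ}
    (h : IsSol T Ω f t₀ q₀ q I) {t : ℝ} (ht : t ∈ I ∩ T) (htt : t₀ < t) :
    IsSolIcc T Ω f t₀ q₀ q t₀ t := by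
  obtain ⟨⟨-, a, ha, b, hb, hab⟩, -, h⟩ := h
  have hat : a ≤ t₀ ∧ Trile T t₀ a t := by
    rcases hab with ⟨h1, h2, h3⟩ | ⟨h1, h2, h3⟩ | ⟨h1, h2, h3, h4⟩
    · exact ⟨h2.le, Or.inl ⟨h1, h2, htt⟩⟩
    · exact absurd (h1.2 ht.2) (not_le.2 htt)
    · exact ⟨h3.le, Or.inr (Or.inr ⟨h1, h2, h3, htt⟩)⟩
  obtain ⟨h1, h2, h3, h4⟩ := h a ha t ht hat.2
  exact ⟨fun s hs => h1 s ⟨Icc_subset_Icc hat.1 le_rfl hs.1, hs.2⟩, h2.mono hat.1 le_rfl, h3,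
    ae_mono (Measure.restrict_mono (inter_subset_inter_left _
      (Ico_subset_Ico hat.1 le_rfl)) le_rfl) h4⟩

lemma IsSol.left {n : ℕ} {T : Set ℝ} {Ω : Set (EuclideanSpace ℝ (Fin n))}
    {f : EuclideanSpace ℝ (Fin n) → ℝ → EuclideanSpace ℝ (Fin n)} {t₀ : ℝ}
    {q₀ : EuclideanSpace ℝ (Fin n)} {q : ℝ → EuclideanSpace ℝ (Fin n)} {I : Set ℝ}
    (h : IsSol T Ω f t₀ q₀ q I) {t : ℝ} (ht : t ∈ I ∩ T) (htt : t < t₀) :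
    IsSolIcc T Ω f t₀ q₀ q t t₀ := by
  obtain ⟨⟨-, a, ha, b, hb, hab⟩, -, h⟩ := h
  have hbt : t₀ ≤ b ∧ Trile T t₀ t b := by
    rcases hab with ⟨h1, h2, h3⟩ | ⟨h1, h2, h3⟩ | ⟨h1, h2, h3, h4⟩
    · exact absurd (h1.2 ht.2) (not_le.2 htt)
    · exact ⟨h3.le, Or.inr (Or.inl ⟨h1, htt, h3⟩)⟩
    · exact ⟨h4.le, Or.inr (Or.inr ⟨h1, h2, htt, h4⟩)⟩
  obtain ⟨h1, h2, h3, h4⟩ := h t ht b hb hbt.2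
  exact ⟨fun s hs => h1 s ⟨Icc_subset_Icc le_rfl hbt.1 hs.1, hs.2⟩, h2.mono le_rfl hbt.1, h3,
    ae_mono (Measure.restrict_mono (inter_subset_inter_left _
      (Ico_subset_Ico le_rfl hbt.1)) le_rfl) h4⟩

theorem stmt11 {n : ℕ}
    (T : Set ℝ) (hTclosed : IsClosed T) (hTnontriv : T.Nontrivial)
    (Ω : Set (EuclideanSpace ℝ (Fin n))) (hΩopen : IsOpen Ω) (hΩne : Ω.Nonempty)
    (f : EuclideanSpace ℝ (Fin n) → ℝ → EuclideanSpace ℝ (Fin n)) (hf : DeltaCaratheodory T Ω f)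
    (t₀ : ℝ) (ht₀ : t₀ ∈ T) (q₀ : EuclideanSpace ℝ (Fin n)) (hq₀ : q₀ ∈ Ω)
    (h1 : IsLeast T t₀ → HInfty T Ω f ∧ HrdLocLip T Ω f ∧ HforwStab T Ω f)
    (h2 : IsGreatest T t₀ → HInfty T Ω f ∧ HldLocLip T Ω f ∧ HbackRegr T Ω f)
    (h3 : ¬ IsLeast T t₀ → ¬ IsGreatest T t₀ →
      HInfty T Ω f ∧ HrdLocLip T Ω f ∧ HforwStab T Ω f ∧ HldLocLip T Ω f ∧ HbackRegr T Ω f)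
    (q₁ : ℝ → EuclideanSpace ℝ (Fin n)) (I₁ : Set ℝ) (hq₁ : IsSol T Ω f t₀ q₀ q₁ I₁)
    (q₂ : ℝ → EuclideanSpace ℝ (Fin n)) (I₂ : Set ℝ) (hq₂ : IsSol T Ω f t₀ q₀ q₂ I₂) :
    EqOn q₁ q₂ (I₁ ∩ I₂ ∩ T) := by
  rintro t ⟨⟨ht1, ht2⟩, htT⟩
  have heq : q₁ t₀ = q₂ t₀ := hq₁.initial.trans hq₂.initial.symm
  rcases lt_trichotomy t₀ t with htt | rfl | htt
  · have hng : ¬ IsGreatest T t₀ := fun h => absurd (h.2 htT) (not_le.2 htt)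
    have hrd : HrdLocLip T Ω f := by
      by_cases hl : IsLeast T t₀
      · exact (h1 hl).2.1
      · exact (h3 hl hng).2.1
    obtain ⟨a1, a2, -, a4⟩ := hq₁.right ⟨ht1, htT⟩ htt
    obtain ⟨-, b2, -, b4⟩ := hq₂.right ⟨ht2, htT⟩ htt
    exact unique_forward hTclosed hrd ht₀ htT htt.le a1 a2 b2 a4 b4 heq
  · exact heq
  · have hnl : ¬ IsLeast T t₀ := fun h => absurd (h.2 htT) (not_le.2 htt)
    have hld : HldLocLip T Ω f ∧ HbackRegr T Ω f := by
      by_cases hg : IsGreatest T t₀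
      · exact (h2 hg).2
      · exact (h3 hnl hg).2.2.2
    obtain ⟨a1, a2, -, a4⟩ := hq₁.left ⟨ht1, htT⟩ htt
    obtain ⟨b1, b2, -, b4⟩ := hq₂.left ⟨ht2, htT⟩ htt
    exact unique_backward hTclosed hld.1 hld.2 htT ht₀ htt.le a1 b1 a2 b2 a4 b4 heq

end
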